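/- arXiv:1408.2439 — 2 statements merged into one kernel-verified Lean document; each statement's English description precedes it below -/
import Mathlib

section
/- Let Δ be a root basis of level 1 or 2 in a non-degenerate quadratic space (V,B). Then any two distinct vectors x, y ∈ Ω satisfy B(x,y) ≤ 0; equivalently, B(ω_I, w(ω_J)) ≤ 0 for all weights ω_I, ω_J ∈ Δ* and all w ∈ W with w(ω_J) ≠ ω_I. -/
open scoped BigOperators

namespace BoydMaxwell

variable {V : Type*} [AddCommGroup V] [Module ℝ V]

/-- `(V, B)` is a Lorentz space: `B` is non-degenerate with exactly one negative
eigenvalue, i.e. there is a time-like vector but every subspace on which `B` is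
negative definite has dimension at most `1`. -/
def IsLorentz (B : LinearMap.BilinForm ℝ V) : Prop :=
  B.Nondegenerate ∧ (∃ v : V, B v v < 0) ∧
    ∀ W : Submodule ℝ V, (∀ v ∈ W, v ≠ 0 → B v v < 0) → Module.finrank ℝ W ≤ 1

/-- A root basis in the quadratic space `(V, B)`. -/
structure IsRootBasis (B : LinearMap.BilinForm ℝ V) (Δ : Finset V) : Prop where
  unit : ∀ α ∈ Δ, B α α = 1
  offdiag : ∀ α ∈ Δ, ∀ β ∈ Δ, α ≠ β →
    B α β ≤ -1 ∨ ∃ k : ℕ, 2 ≤ k ∧ B α β = -Real.cos (Real.pi / k)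
  posIndep : ∀ c : V → ℝ, (∀ α ∈ Δ, 0 ≤ c α) →
    (∑ α ∈ Δ, c α • α) = 0 → ∀ α ∈ Δ, c α = 0
  spans : Submodule.span ℝ (Δ : Set V) = ⊤

/-- The reflection `s_α : x ↦ x - 2 B(α,x) α`. -/
def reflection (B : LinearMap.BilinForm ℝ V) (α : V) : V →ₗ[ℝ] V :=
  LinearMap.id - (B α).smulRight ((2 : ℝ) • α)

/-- The Weyl group `W`: the subgroup of linear automorphisms generated by the
reflections in the simple roots. -/
def weylGroup (B : LinearMap.BilinForm ℝ V) (Δ : Finset V) : Subgroup (V ≃ₗ[ℝ] V) :=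
  Subgroup.closure { g : V ≃ₗ[ℝ] V | ∃ α ∈ Δ, (g : V →ₗ[ℝ] V) = reflection B α }

/-- The set of roots `Φ = W(Δ)`. -/
def roots (B : LinearMap.BilinForm ℝ V) (Δ : Finset V) : Set V :=
  { x | ∃ w ∈ weylGroup B Δ, ∃ α ∈ Δ, x = w α }

/-- The polyhedral cone of non-negative linear combinations of a finite set. -/
def cone (Δ : Finset V) : Set V :=
  { x | ∃ c : V → ℝ, (∀ α ∈ Δ, 0 ≤ c α) ∧ x = ∑ α ∈ Δ, c α • α }

/-- `F` is a face of the convex set `C`. -/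
def IsFace (C F : Set V) : Prop :=
  F ⊆ C ∧ Convex ℝ F ∧ ∀ x ∈ C, ∀ y ∈ C, ∀ t : ℝ, 0 < t → t < 1 →
    t • x + (1 - t) • y ∈ F → x ∈ F ∧ y ∈ F

/-- `I ⊆ Δ` is an `l`-facial subset: `Cone(I)` is a face of `Cone(Δ)` and
`Span(I)` has codimension `l` in `V`. -/
def IsFacial (Δ I : Finset V) (l : ℕ) : Prop :=
  I ⊆ Δ ∧ IsFace (cone Δ) (cone I) ∧
    Module.finrank ℝ (Submodule.span ℝ (I : Set V)) + l = Module.finrank ℝ V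

/-- `B` is positive semidefinite on the span of every `l`-facial subset. -/
def LevelLE (B : LinearMap.BilinForm ℝ V) (Δ : Finset V) (l : ℕ) : Prop :=
  ∀ I : Finset V, IsFacial Δ I l → ∀ x ∈ Submodule.span ℝ (I : Set V), 0 ≤ B x x

/-- The root system generated by `Δ` has level exactly `l`: `l` is the smallest
integer such that `B` is positive semidefinite on the span of every `l`-facial
subset of `Δ`. -/
def HasLevel (B : LinearMap.BilinForm ℝ V) (Δ : Finset V) (l : ℕ) : Prop :=
  LevelLE B Δ l ∧ ∀ m : ℕ, m < l → ¬ LevelLE B Δ m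

/-- `ω` is the weight associated to the `1`-facial subset `I`. -/
def IsWeight (B : LinearMap.BilinForm ℝ V) (Δ I : Finset V) (ω : V) : Prop :=
  IsFacial Δ I 1 ∧ (∀ α ∈ I, B α ω = 0) ∧
    (∀ α ∈ Δ, α ∉ I → 0 < B α ω) ∧
    (∀ α ∈ Δ, α ∉ I → 1 ≤ B α ω) ∧ (∃ α ∈ Δ, α ∉ I ∧ B α ω = 1)

/-- The set `Δ*` of weights. -/
def weights (B : LinearMap.BilinForm ℝ V) (Δ : Finset V) : Set V :=
  { ω | ∃ I : Finset V, IsWeight B Δ I ω }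

/-- The orbit `Ω = W(Δ*)`. -/
def Omega (B : LinearMap.BilinForm ℝ V) (Δ : Finset V) : Set V :=
  { x | ∃ w ∈ weylGroup B Δ, ∃ ω ∈ weights B Δ, x = w ω }

/-- Two vectors are disjoint: `B(x,y) ≤ 0` and `B` is not positive definite on
`Span{x,y}`. -/
def DisjointVec (B : LinearMap.BilinForm ℝ V) (x y : V) : Prop :=
  B x y ≤ 0 ∧ ¬ ∀ z ∈ Submodule.span ℝ ({x, y} : Set V), z ≠ 0 → 0 < B z z

/-- The fundamental chamber `C* = {x | B(x, α) ≥ 0 for all α ∈ Δ}`. -/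
def chamber (B : LinearMap.BilinForm ℝ V) (Δ : Finset V) : Set V :=
  { x | ∀ α ∈ Δ, 0 ≤ B x α }

/-- The Tits cone `T = ⋃_{w ∈ W} w(C*)`. -/
def titsCone (B : LinearMap.BilinForm ℝ V) (Δ : Finset V) : Set V :=
  { x | ∃ w ∈ weylGroup B Δ, ∃ y ∈ chamber B Δ, x = w y }

/-- The convex cone generated by an arbitrary set. -/
def coneOf (X : Set V) : Set V :=
  { x | ∃ (s : Finset V) (c : V → ℝ), (↑s ⊆ X) ∧ (∀ v ∈ s, 0 ≤ c v) ∧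
      x = ∑ v ∈ s, c v • v }

/-!
Level at most `2` enters only through the facets of `Cone(Δ)`: on the relative boundary of each
facet `Cone(I)` the form `B` is nonnegative. If `B` is positive semidefinite on `Span(I)`, then
`ω_I` is not space-like, because `ω_I` spans the orthogonal complement of `Span(I)`. Otherwise a
Perron–Frobenius vector in `Cone(I)` shows that every vector of `Span(I)` dual to `Cone(I)` lies in
`-Cone(I)`; applied to the projections of the roots `α ∉ I` this gives `0 < B(ω_I, ω_I) ≤ 1`. In
all cases `B(ω_I, ω_J) ≤ 0` for distinct weights.

The group `W` is a Coxeter group acting geometrically, so `w(α)` is a positive root whenever `s_α`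
lengthens `w` on the right. For `x`, `y` in the fundamental chamber `B(x, w(y))` therefore never
increases along a reduced word, which settles `ω_I ≠ ω_J`. For `ω_I = ω_J = ω` the first reflection
that moves `ω` lowers `B(ω, w(ω))` from `B(ω, ω) ≤ 1` by at least `2`.
-/

/-! ### Finitely generated cones -/

section Farkas

variable {𝕜 E : Type*} [Field 𝕜] [LinearOrder 𝕜] [IsStrictOrderedRing 𝕜]
  [AddCommGroup E] [Module 𝕜 E]

lemma nonneg_of_mem_hull {s : Set E} {f : Module.Dual 𝕜 E} (hf : ∀ a ∈ s, 0 ≤ f a) {x : E}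
    (hx : x ∈ PointedCone.hull 𝕜 s) : 0 ≤ f x := by
  induction hx using Submodule.span_induction with
  | mem a ha => exact hf a ha
  | zero => simp
  | add x y _ _ hx hy => simpa using add_nonneg hx hy
  | smul c x _ hx =>
    change 0 ≤ f ((c : 𝕜) • x)
    rw [map_smul]
    exact mul_nonneg c.2 hx

lemma mem_hull_insert {s : Set E} {v x : E} :
    x ∈ PointedCone.hull 𝕜 (insert v s) ↔
      ∃ c : 𝕜, 0 ≤ c ∧ ∃ y ∈ PointedCone.hull 𝕜 s, x = c • v + y := by
  rw [PointedCone.hull, Submodule.mem_span_insert]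
  exact ⟨fun ⟨c, y, hy, h⟩ => ⟨c, c.2, y, hy, h⟩, fun ⟨c, hc, y, hy, h⟩ => ⟨⟨c, hc⟩, y, hy, h⟩⟩

lemma mem_hull_zeros {s : Set E} {f : Module.Dual 𝕜 E} (hf : ∀ a ∈ s, 0 ≤ f a) {x : E}
    (hx : x ∈ PointedCone.hull 𝕜 s) (hfx : f x = 0) :
    x ∈ PointedCone.hull 𝕜 {a ∈ s | f a = 0} := by
  induction hx using Submodule.span_induction with
  | mem a ha => exact Submodule.subset_span ⟨ha, hfx⟩
  | zero => exact zero_mem _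
  | add x y hx hy ihx ihy =>
    rw [map_add, add_eq_zero_iff_of_nonneg (nonneg_of_mem_hull hf hx)
      (nonneg_of_mem_hull hf hy)] at hfx
    exact add_mem (ihx hfx.1) (ihy hfx.2)
  | smul c x _ ih =>
    change f ((c : 𝕜) • x) = 0 at hfx
    rw [map_smul, smul_eq_zero] at hfx
    rcases hfx with hc | hfx
    · rw [show c = 0 from Subtype.ext hc, zero_smul]
      exact zero_mem _
    · exact Submodule.smul_mem _ c (ih hfx)

-- Fourier–Motzkin elimination: if `g` is nonnegative on `s` and `g v = -1`, the projection
-- `x ↦ x + g x • v` along `v` removes the generator `v`.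
lemma mem_hull_insert_of_add_smul_mem_hull {s : Set E} {g : Module.Dual 𝕜 E} {v b : E}
    (hgs : ∀ a ∈ s, 0 ≤ g a) (hgb : g b < 0)
    (hb : b + g b • v ∈ PointedCone.hull 𝕜 ((LinearMap.id + g.smulRight v : E →ₗ[𝕜] E) '' s)) :
    b ∈ PointedCone.hull 𝕜 (insert v s) := by
  obtain ⟨y, hy, hyb⟩ : ∃ y ∈ PointedCone.hull 𝕜 s, y + g y • v = b + g b • v := by
    rwa [PointedCone.hull, ← LinearMap.coe_restrictScalars {c : 𝕜 // 0 ≤ c},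
      Submodule.span_image] at hb
  refine mem_hull_insert.2 ⟨g y - g b, ?_, y, hy, ?_⟩
  · linarith [nonneg_of_mem_hull hgs hy]
  · linear_combination (norm := module) -hyb

lemma exists_dual_nonneg_of_notMem_hull_image {s : Set E} (hs : s.Finite) :
    ∀ (P : E →ₗ[𝕜] E) (b : E), b ∉ PointedCone.hull 𝕜 (P '' s) →
      ∃ f : Module.Dual 𝕜 E, (∀ a ∈ P '' s, 0 ≤ f a) ∧ f b < 0 := by
  induction s, hs using Set.Finite.induction_on with
  | empty =>
    intro _ b hb
    have hb0 : b ≠ 0 := by simpa using hb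
    obtain ⟨f, hf⟩ := not_forall.1 (mt (Module.forall_dual_apply_eq_zero_iff 𝕜 b).1 hb0)
    rcases lt_or_gt_of_ne hf with hf | hf
    · exact ⟨f, by simp, hf⟩
    · exact ⟨-f, by simp, by simpa using hf⟩
  | @insert v s _ _ ih =>
    intro P b hb
    rw [Set.image_insert_eq] at hb ⊢
    obtain ⟨f, hfs, hfb⟩ := ih P b fun h => hb (Submodule.span_mono (Set.subset_insert _ _) h)
    rcases le_or_gt 0 (f (P v)) with hfv | hfv
    · exact ⟨f, Set.forall_mem_insert.2 ⟨hfv, hfs⟩, hfb⟩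
    obtain ⟨g, hgv, hgs, hgb⟩ : ∃ g : Module.Dual 𝕜 E,
        g (P v) = -1 ∧ (∀ a ∈ P '' s, 0 ≤ g a) ∧ g b < 0 := by
      have hpos : 0 < -(f (P v))⁻¹ := neg_pos.2 (inv_lt_zero.2 hfv)
      exact ⟨-(f (P v))⁻¹ • f, by simp [hfv.ne], fun a ha => mul_nonneg hpos.le (hfs a ha),
        mul_neg_of_pos_of_neg hpos hfb⟩
    set Q : E →ₗ[𝕜] E := LinearMap.id + g.smulRight (P v)
    have hQ : Q b ∉ PointedCone.hull 𝕜 ((Q ∘ₗ P) '' s) := by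
      rw [LinearMap.coe_comp, Set.image_comp]
      exact mt (mem_hull_insert_of_add_smul_mem_hull hgs hgb) hb
    obtain ⟨f', hf's, hf'b⟩ := ih (Q ∘ₗ P) (Q b) hQ
    refine ⟨f' ∘ₗ Q, Set.forall_mem_insert.2 ⟨?_, ?_⟩, hf'b⟩
    · simp [Q, hgv]
    · rintro _ ⟨a, ha, rfl⟩
      exact hf's _ ⟨a, ha, rfl⟩

theorem exists_dual_nonneg_of_notMem_hull {s : Set E} (hs : s.Finite) {b : E}
    (hb : b ∉ PointedCone.hull 𝕜 s) :
    ∃ f : Module.Dual 𝕜 E, (∀ a ∈ s, 0 ≤ f a) ∧ f b < 0 := by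
  simpa using exists_dual_nonneg_of_notMem_hull_image hs LinearMap.id b (by simpa using hb)

end Farkas

lemma coe_hull_eq_cone (I : Finset V) : (PointedCone.hull ℝ (I : Set V) : Set V) = cone I := by
  classical
  ext x
  rw [SetLike.mem_coe, PointedCone.hull, Submodule.mem_span_finset]
  constructor
  · rintro ⟨c, -, rfl⟩
    exact ⟨fun a => c a, fun a _ => (c a).2, rfl⟩
  · rintro ⟨c, hc, rfl⟩
    refine ⟨fun a => if ha : a ∈ I then ⟨c a, hc a ha⟩ else 0, fun a ha => ?_,
      Finset.sum_congr rfl fun a ha => ?_⟩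
    · by_contra h
      exact ha (dif_neg h)
    · simp only [dif_pos ha]
      rfl

lemma exists_isGreatest_sub_smul_mem_hull {s : Set V} (hs : s.Finite) {v x : V}
    (hv : v ∈ PointedCone.hull ℝ s) (hx : -x ∉ PointedCone.hull ℝ s) :
    ∃ t, IsGreatest {t : ℝ | 0 ≤ t ∧ v - t • x ∈ PointedCone.hull ℝ s} t := by
  set T := {t : ℝ | 0 ≤ t ∧ v - t • x ∈ PointedCone.hull ℝ s}
  have le_div {f : Module.Dual ℝ V} (hf : ∀ a ∈ s, 0 ≤ f a) (hfx : 0 < f x) :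
      ∀ t ∈ T, t ≤ f v / f x := by
    rintro t ⟨_, ht⟩
    have := nonneg_of_mem_hull hf ht
    rw [le_div_iff₀ hfx]
    simpa using this
  have zero_mem : 0 ∈ T := ⟨le_rfl, by simpa using hv⟩
  obtain ⟨f, hf, hfx⟩ := exists_dual_nonneg_of_notMem_hull hs hx
  have hbdd : BddAbove T := ⟨_, le_div hf (by simpa using hfx)⟩
  refine ⟨sSup T, ⟨le_csSup hbdd zero_mem, ?_⟩, fun t ht => le_csSup hbdd ht⟩
  by_contra hmem
  obtain ⟨g, hg, hgz⟩ := exists_dual_nonneg_of_notMem_hull hs hmem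
  simp only [map_sub, map_smul, smul_eq_mul] at hgz
  have hgv := nonneg_of_mem_hull hg hv
  have hgx : 0 < g x := by nlinarith [le_csSup hbdd zero_mem]
  have := csSup_le ⟨0, zero_mem⟩ (le_div hg hgx)
  rw [le_div_iff₀ hgx] at this
  linarith

lemma exists_dual_of_isGreatest_sub_smul_mem_hull {s : Set V} (hs : s.Finite) {v x : V}
    (hx : -x ∉ PointedCone.hull ℝ s) {t : ℝ}
    (ht : IsGreatest {t : ℝ | 0 ≤ t ∧ v - t • x ∈ PointedCone.hull ℝ s} t) :
    ∃ f : Module.Dual ℝ V, (∀ a ∈ s, 0 ≤ f a) ∧ 0 < f x ∧ f (v - t • x) = 0 := by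
  obtain ⟨⟨ht0, hz⟩, hmax⟩ := ht
  have hnot : -x ∉ PointedCone.hull ℝ (insert (-(v - t • x)) s) := by
    rw [mem_hull_insert]
    rintro ⟨c, hc, y, hy, hxy⟩
    rcases hc.eq_or_lt with rfl | hc
    · exact hx (by simpa [hxy] using hy)
    have hstep : v - (t + c⁻¹) • x = c⁻¹ • y := by
      rw [eq_inv_smul_iff₀ hc.ne']
      have hcc : c • c⁻¹ • x = x := smul_inv_smul₀ hc.ne' x
      linear_combination (norm := module) hxy - hcc
    have := hmax ⟨by positivity, hstep ▸ PointedCone.smul_mem _ (inv_nonneg.2 hc.le) hy⟩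
    linarith [inv_pos.2 hc]
  obtain ⟨f, hf, hfx⟩ := exists_dual_nonneg_of_notMem_hull (hs.insert _) hnot
  obtain ⟨hfz, hfs⟩ := Set.forall_mem_insert.1 hf
  refine ⟨f, hfs, by simpa using hfx, le_antisymm ?_ (nonneg_of_mem_hull hfs hz)⟩
  simpa using hfz

/-! ### Faces and facets -/

lemma exists_add_smul_nonneg_of_neg {I : Finset V} {g h : Module.Dual ℝ V}
    (hg : ∀ β ∈ I, 0 ≤ g β) (hh : ∃ γ ∈ I, h γ < 0) :
    ∃ t : ℝ, (∀ β ∈ I, 0 ≤ (g + t • h) β) ∧ ∃ α ∈ I, h α < 0 ∧ (g + t • h) α = 0 := by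
  classical
  obtain ⟨γ, hγ, hhγ⟩ := hh
  obtain ⟨α, hα, hmin⟩ := Finset.exists_min_image (I.filter (h · < 0)) (fun β => g β / -h β)
    ⟨γ, Finset.mem_filter.2 ⟨hγ, hhγ⟩⟩
  obtain ⟨hαI, hhα⟩ := Finset.mem_filter.1 hα
  have ht : 0 ≤ g α / -h α := div_nonneg (hg α hαI) (by linarith)
  refine ⟨g α / -h α, fun β hβ => ?_, α, hαI, hhα, ?_⟩
  · simp only [LinearMap.add_apply, LinearMap.smul_apply, smul_eq_mul]
    rcases lt_or_ge (h β) 0 with hhβ | hhβ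
    · have := hmin β (Finset.mem_filter.2 ⟨hβ, hhβ⟩)
      rw [le_div_iff₀ (by linarith)] at this
      linarith
    · exact add_nonneg (hg β hβ) (mul_nonneg ht hhβ)
  · simp only [LinearMap.add_apply, LinearMap.smul_apply, smul_eq_mul]
    field_simp [hhα.ne]
    ring

section

variable [FiniteDimensional ℝ V]

lemma exists_dual_zeros_lt_of_finrank_lt {I : Finset V} {g : Module.Dual ℝ V}
    (hg : ∀ β ∈ I, 0 ≤ g β) {β₀ : V} (hβ₀ : β₀ ∈ I) (hgβ₀ : 0 < g β₀)
    (hlt : Module.finrank ℝ (Submodule.span ℝ {β ∈ (I : Set V) | g β = 0}) + 1 <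
      Module.finrank ℝ (Submodule.span ℝ (I : Set V))) :
    ∃ g' : Module.Dual ℝ V, (∀ β ∈ I, 0 ≤ g' β) ∧ 0 < g' β₀ ∧
      (∀ β ∈ I, g β = 0 → g' β = 0) ∧ ∃ α ∈ I, g α ≠ 0 ∧ g' α = 0 := by
  set S₀ := Submodule.span ℝ {β ∈ (I : Set V) | g β = 0}
  set S := S₀ ⊔ Submodule.span ℝ {β₀}
  have hrank : Module.finrank ℝ S < Module.finrank ℝ (Submodule.span ℝ (I : Set V)) :=
    calc Module.finrank ℝ S
      _ ≤ Module.finrank ℝ S₀ + Module.finrank ℝ (Submodule.span ℝ {β₀}) :=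
        Submodule.finrank_add_le_finrank_add_finrank _ _
      _ = Module.finrank ℝ S₀ + 1 := by
        rw [finrank_span_singleton (by rintro rfl; simp at hgβ₀)]
      _ < Module.finrank ℝ (Submodule.span ℝ (I : Set V)) := hlt
  obtain ⟨γ, hγ, hγS⟩ : ∃ γ ∈ I, γ ∉ S := by
    by_contra! hIS
    exact hrank.not_ge (Submodule.finrank_mono (Submodule.span_le.2 hIS))
  obtain ⟨h, hhγ, hhS⟩ : ∃ h : Module.Dual ℝ V, h γ < 0 ∧ ∀ x ∈ S, h x = 0 := by
    obtain ⟨h, hhγ, hhS⟩ := Submodule.exists_le_ker_of_notMem hγS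
    rcases lt_or_gt_of_ne hhγ with hneg | hpos
    · exact ⟨h, hneg, hhS⟩
    · exact ⟨-h, by simpa using hpos, fun x hx => by simpa using hhS hx⟩
  have hzeros : ∀ β ∈ I, g β = 0 → h β = 0 := fun β hβ hgβ =>
    hhS β (Submodule.mem_sup_left (Submodule.subset_span ⟨hβ, hgβ⟩))
  have hhβ₀ : h β₀ = 0 := hhS β₀ (Submodule.mem_sup_right (Submodule.mem_span_singleton_self β₀))
  obtain ⟨t, hnonneg, α, hα, hhα, hzero⟩ := exists_add_smul_nonneg_of_neg hg ⟨γ, hγ, hhγ⟩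
  exact ⟨g + t • h, hnonneg, by simpa [hhβ₀] using hgβ₀,
    fun β hβ hgβ => by simp [hgβ, hzeros β hβ hgβ],
    α, hα, fun hgα => hhα.ne (hzeros α hα hgα), hzero⟩

lemma finrank_span_lt_of_dual {s t : Set V} (hst : s ⊆ t) {g : Module.Dual ℝ V}
    (hs : ∀ β ∈ s, g β = 0) (ht : ∃ α ∈ t, g α ≠ 0) :
    Module.finrank ℝ (Submodule.span ℝ s) < Module.finrank ℝ (Submodule.span ℝ t) := by
  obtain ⟨α, hα, hgα⟩ := ht
  have hker : Submodule.span ℝ s ≤ LinearMap.ker g := Submodule.span_le.2 hs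
  exact Submodule.finrank_lt_finrank_of_lt (SetLike.lt_iff_le_and_exists.2
    ⟨Submodule.span_mono hst, α, Submodule.subset_span hα, fun h => hgα (hker h)⟩)

theorem exists_dual_facet {I : Finset V} {f : Module.Dual ℝ V} (hf : ∀ β ∈ I, 0 ≤ f β)
    (hpos : ∃ β ∈ I, 0 < f β) :
    ∃ g : Module.Dual ℝ V, (∀ β ∈ I, 0 ≤ g β) ∧ (∀ β ∈ I, f β = 0 → g β = 0) ∧
      Module.finrank ℝ (Submodule.span ℝ {β ∈ (I : Set V) | g β = 0}) + 1 =
        Module.finrank ℝ (Submodule.span ℝ (I : Set V)) := by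
  obtain ⟨β₀, hβ₀, hfβ₀⟩ := hpos
  have finrank_lt {g : Module.Dual ℝ V} (hg : 0 < g β₀) :
      Module.finrank ℝ (Submodule.span ℝ {β ∈ (I : Set V) | g β = 0}) <
        Module.finrank ℝ (Submodule.span ℝ (I : Set V)) := by
    exact finrank_span_lt_of_dual (Set.sep_subset _ _) (fun _ hβ => hβ.2) ⟨β₀, hβ₀, hg.ne'⟩
  induction hn : Module.finrank ℝ (Submodule.span ℝ (I : Set V)) -
    Module.finrank ℝ (Submodule.span ℝ {β ∈ (I : Set V) | f β = 0}) using
    Nat.strong_induction_on generalizing f with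
  | _ n ih =>
    have hlt := finrank_lt hfβ₀
    by_cases hrank : Module.finrank ℝ (Submodule.span ℝ {β ∈ (I : Set V) | f β = 0}) + 1 =
        Module.finrank ℝ (Submodule.span ℝ (I : Set V))
    · exact ⟨f, hf, fun _ _ => id, hrank⟩
    obtain ⟨f', hf', hf'β₀, hzeros, α, hα, hfα, hf'α⟩ :=
      exists_dual_zeros_lt_of_finrank_lt hf hβ₀ hfβ₀ (by omega)
    have : Module.finrank ℝ (Submodule.span ℝ {β ∈ (I : Set V) | f β = 0}) <
        Module.finrank ℝ (Submodule.span ℝ {β ∈ (I : Set V) | f' β = 0}) :=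
      finrank_span_lt_of_dual (fun β hβ => ⟨hβ.1, hzeros β hβ.1 hβ.2⟩) (fun _ hβ => hβ.2)
        ⟨α, ⟨hα, hf'α⟩, hfα⟩
    have := finrank_lt hf'β₀
    obtain ⟨g, hg, hgzeros, hgrank⟩ := ih _ (by omega) hf' hf'β₀ rfl
    exact ⟨g, hg, fun β hβ hfβ => hgzeros β hβ (hzeros β hβ hfβ), hgrank⟩

end

lemma isFace_hull_zeros {s : Set V} {g : Module.Dual ℝ V} (hg : ∀ β ∈ s, 0 ≤ g β) :
    IsFace (PointedCone.hull ℝ s : Set V) (PointedCone.hull ℝ {β ∈ s | g β = 0}) := by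
  refine ⟨Submodule.span_mono (Set.sep_subset _ _), PointedCone.convex _, ?_⟩
  intro x hx y hy t ht ht1 hxy
  have hgxy : t * g x + (1 - t) * g y = 0 := by
    have := Submodule.span_le (p := LinearMap.ker g) |>.2 (fun β hβ => hβ.2)
      (PointedCone.hull_le_span ℝ _ hxy)
    simpa using this
  rw [add_eq_zero_iff_of_nonneg (mul_nonneg ht.le (nonneg_of_mem_hull hg hx))
    (mul_nonneg (sub_nonneg.2 ht1.le) (nonneg_of_mem_hull hg hy)), mul_eq_zero, mul_eq_zero,
    or_iff_right ht.ne', or_iff_right (sub_pos.2 ht1).ne'] at hgxy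
  exact ⟨mem_hull_zeros hg hx hgxy.1, mem_hull_zeros hg hy hgxy.2⟩

lemma IsFace.trans {C F G : Set V} (hF : IsFace C F) (hG : IsFace F G) : IsFace C G :=
  ⟨hG.1.trans hF.1, hG.2.1, fun x hx y hy t ht ht1 hxy =>
    have ⟨hxF, hyF⟩ := hF.2.2 x hx y hy t ht ht1 (hG.1 hxy)
    hG.2.2 x hxF y hyF t ht ht1 hxy⟩

open Classical in
lemma IsFacial.zeros {Δ I : Finset V} {l : ℕ} (hI : IsFacial Δ I l) {g : Module.Dual ℝ V}
    (hg : ∀ β ∈ I, 0 ≤ g β)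
    (hrank : Module.finrank ℝ (Submodule.span ℝ {β ∈ (I : Set V) | g β = 0}) + 1 =
      Module.finrank ℝ (Submodule.span ℝ (I : Set V))) :
    IsFacial Δ (I.filter (g · = 0)) (l + 1) := by
  obtain ⟨hIΔ, hface, hl⟩ := hI
  have hfacet : IsFace (cone I) (cone (I.filter (g · = 0))) := by
    rw [← coe_hull_eq_cone, ← coe_hull_eq_cone, Finset.coe_filter]
    exact isFace_hull_zeros hg
  refine ⟨(Finset.filter_subset _ _).trans hIΔ, hface.trans hfacet, ?_⟩
  have : ((I.filter (g · = 0) : Finset V) : Set V) = {β ∈ (I : Set V) | g β = 0} :=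
    Finset.coe_filter _ _
  rw [this]
  omega

/-- The form `B` is nonnegative on the relative boundary of the cone generated by `s`, the
boundary points being those annihilated by a functional that is nonnegative but not identically
zero on `s`. For facets of `Cone(Δ)` this is what level at most `2` provides. -/
def NonnegOnBoundary (B : LinearMap.BilinForm ℝ V) (s : Set V) : Prop :=
  ∀ f : Module.Dual ℝ V, (∀ β ∈ s, 0 ≤ f β) → (∃ β ∈ s, 0 < f β) →
    ∀ z ∈ PointedCone.hull ℝ s, f z = 0 → 0 ≤ B z z

lemma IsFacial.nonnegOnBoundary [FiniteDimensional ℝ V] {B : LinearMap.BilinForm ℝ V}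
    {Δ I : Finset V} {l : ℕ} (hI : IsFacial Δ I l) (hlev : LevelLE B Δ (l + 1)) :
    NonnegOnBoundary B (I : Set V) := by
  classical
  intro f hf hpos z hz hfz
  obtain ⟨g, hg, hzeros, hrank⟩ := exists_dual_facet hf hpos
  have hzspan := PointedCone.hull_le_span ℝ _ (mem_hull_zeros hf hz hfz)
  refine hlev _ (hI.zeros hg hrank) z (Submodule.span_mono (fun β hβ => ?_) hzspan)
  exact Finset.mem_coe.2 (Finset.mem_filter.2 ⟨hβ.1, hzeros β hβ.1 hβ.2⟩)

lemma IsFacial.nonnegOnBoundary_of_levelLE {B : LinearMap.BilinForm ℝ V} {Δ I : Finset V}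
    {l : ℕ} (hI : IsFacial Δ I l) (hlev : LevelLE B Δ l) : NonnegOnBoundary B (I : Set V) :=
  fun _ _ _ z hz _ => hlev I hI z (PointedCone.hull_le_span ℝ _ hz)

lemma NonnegOnBoundary.exists_sub_smul_mem_hull {B : LinearMap.BilinForm ℝ V} {s : Set V}
    (hB : NonnegOnBoundary B s) (hs : s.Finite) {v x : V} (hv : v ∈ PointedCone.hull ℝ s)
    (hx : x ∈ Submodule.span ℝ s) (hnx : -x ∉ PointedCone.hull ℝ s) :
    ∃ t : ℝ, 0 ≤ t ∧ v - t • x ∈ PointedCone.hull ℝ s ∧ 0 ≤ B (v - t • x) (v - t • x) := by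
  obtain ⟨t, ht⟩ := exists_isGreatest_sub_smul_mem_hull hs hv hnx
  obtain ⟨f, hf, hfx, hfz⟩ := exists_dual_of_isGreatest_sub_smul_mem_hull hs hnx ht
  refine ⟨t, ht.1.1, ht.1.2, hB f hf ?_ _ ht.1.2 hfz⟩
  by_contra! hfs
  have : f x = 0 := Submodule.span_le (p := LinearMap.ker f) |>.2
    (fun β hβ => le_antisymm (hfs β hβ) (hf β hβ)) hx
  exact hfx.ne' this

/-! ### Nonnegative eigenvectors -/

section PerronFrobenius

open Matrix

variable {ι : Type*} [Fintype ι] {A : Matrix ι ι ℝ}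

lemma abs_dotProduct_mulVec_abs_le (hoff : ∀ i j, i ≠ j → A i j ≤ 0) (u : ι → ℝ) :
    |u| ⬝ᵥ A *ᵥ |u| ≤ u ⬝ᵥ A *ᵥ u := by
  simp only [dotProduct, mulVec, Finset.mul_sum, Pi.abs_apply]
  refine Finset.sum_le_sum fun i _ => Finset.sum_le_sum fun j _ => ?_
  rcases eq_or_ne i j with rfl | hij
  · exact le_of_eq (by linear_combination A i i * abs_mul_abs_self (u i))
  · have := le_abs_self (u i * u j)
    rw [abs_mul] at this
    nlinarith [mul_le_mul_of_nonpos_left this (hoff i j hij)]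

-- Perron–Frobenius: replacing a minimiser of the quadratic form on a sphere by its absolute value
-- gives another minimiser, hence an eigenvector for the lowest eigenvalue.
theorem exists_nonneg_eigenvector_of_neg (hA : A.IsHermitian) (hoff : ∀ i j, i ≠ j → A i j ≤ 0)
    {x : ι → ℝ} (hx : x ⬝ᵥ A *ᵥ x < 0) :
    ∃ d : ι → ℝ, 0 ≤ d ∧ d ≠ 0 ∧ ∃ μ < (0 : ℝ), A *ᵥ d = μ • d := by
  classical
  set T := toEuclideanCLM (n := ι) (𝕜 := ℝ) A
  have hT : IsSelfAdjoint T := hA.isSelfAdjoint.map _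
  have hTu (u : EuclideanSpace ℝ ι) : T.reApplyInnerSelf u = u.ofLp ⬝ᵥ A *ᵥ u.ofLp := by
    rw [T.reApplyInnerSelf_apply, real_inner_comm, RCLike.re_to_real, inner_toEuclideanCLM]
  obtain ⟨u, hu, hmin⟩ :=
    (isCompact_sphere (0 : EuclideanSpace ℝ ι) ‖WithLp.toLp 2 x‖).exists_isMinOn
      ⟨WithLp.toLp 2 x, by simp⟩ T.reApplyInnerSelf_continuous.continuousOn
  set d : EuclideanSpace ℝ ι := WithLp.toLp 2 |u.ofLp|
  have hd : ‖d‖ = ‖WithLp.toLp 2 x‖ := by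
    rw [← mem_sphere_zero_iff_norm.1 hu]
    simp [EuclideanSpace.norm_eq, d]
  have hdu : T.reApplyInnerSelf d ≤ T.reApplyInnerSelf u := by
    simpa only [hTu] using abs_dotProduct_mulVec_abs_le hoff u.ofLp
  have hdmin : IsMinOn T.reApplyInnerSelf (Metric.sphere 0 ‖d‖) d := fun v hv =>
    hdu.trans (hmin (hd ▸ hv))
  have hneg : T.reApplyInnerSelf d < 0 :=
    (hdmin (by simp [hd] : WithLp.toLp 2 x ∈ _)).trans_lt (by rwa [hTu])
  have hd0 : d ≠ 0 := fun h => by simp [h, ContinuousLinearMap.reApplyInnerSelf_apply] at hneg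
  refine ⟨|u.ofLp|, abs_nonneg _, fun h => hd0 (by simp [d, h]), T.rayleighQuotient d,
    div_neg_of_neg_of_pos hneg (pow_pos (norm_pos_iff.2 hd0) 2), ?_⟩
  simpa [T, d] using congrArg WithLp.ofLp
    (hT.eq_smul_self_of_isLocalExtrOn_real (Or.inl hdmin.localize))

end PerronFrobenius

theorem exists_mem_hull_neg {B : LinearMap.BilinForm ℝ V} (hB : B.IsSymm) {I : Finset V}
    (hoff : ∀ α ∈ I, ∀ β ∈ I, α ≠ β → B α β ≤ 0)
    (hneg : ∃ x ∈ Submodule.span ℝ (I : Set V), B x x < 0) :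
    ∃ v ∈ PointedCone.hull ℝ (I : Set V), B v v < 0 ∧ ∀ β ∈ I, B v β ≤ 0 := by
  classical
  let A : Matrix I I ℝ := Matrix.of fun α β => B α β
  let v (c : I → ℝ) : V := ∑ α, c α • (α : V)
  have mulVec_eq (c : I → ℝ) (β : I) : (A.mulVec c) β = B (v c) β := by
    simp [A, v, Matrix.mulVec, dotProduct, mul_comm, hB.eq]
  have apply_self (c : I → ℝ) : c ⬝ᵥ A.mulVec c = B (v c) (v c) := by
    simp [dotProduct, mulVec_eq, v]
  obtain ⟨x, hx, hxneg⟩ := hneg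
  obtain ⟨c, rfl⟩ := Submodule.mem_span_finset'.1 hx
  obtain ⟨d, hd, hd0, μ, hμ, hAd⟩ := exists_nonneg_eigenvector_of_neg (A := A) (x := c)
    (Matrix.IsHermitian.ext fun α β => by simp [A, hB.eq])
    (fun α β h => hoff α α.2 β β.2 (Subtype.coe_ne_coe.2 h))
    (by rwa [apply_self])
  refine ⟨v d, sum_mem fun α _ => PointedCone.smul_mem _ (hd α) (Submodule.subset_span α.2), ?_, ?_⟩
  · rw [← apply_self, hAd, dotProduct_smul]
    exact mul_neg_of_neg_of_pos hμ (Matrix.dotProduct_self_star_pos_iff.2 hd0)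
  · intro β hβ
    rw [← mulVec_eq d ⟨β, hβ⟩, hAd]
    exact mul_nonpos_of_nonpos_of_nonneg hμ.le (hd _)

theorem NonnegOnBoundary.neg_mem_hull {B : LinearMap.BilinForm ℝ V} (hB : B.IsSymm) {I : Finset V}
    (hbd : NonnegOnBoundary B (I : Set V)) (hoff : ∀ α ∈ I, ∀ β ∈ I, α ≠ β → B α β ≤ 0)
    (hneg : ∃ x ∈ Submodule.span ℝ (I : Set V), B x x < 0)
    (hnd : ∀ z ∈ Submodule.span ℝ (I : Set V), (∀ β ∈ I, B z β = 0) → z = 0)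
    {x : V} (hx : x ∈ Submodule.span ℝ (I : Set V)) (hxI : ∀ β ∈ I, 0 ≤ B x β) :
    -x ∈ PointedCone.hull ℝ (I : Set V) := by
  by_contra hnx
  obtain ⟨v, hv, hvneg, hvI⟩ := exists_mem_hull_neg hB hoff hneg
  obtain ⟨t, ht, hz, hzz⟩ := hbd.exists_sub_smul_mem_hull I.finite_toSet hv hx hnx
  set z := v - t • x with hzdef
  have hvz : B v z ≤ 0 := by
    simpa using nonneg_of_mem_hull (f := -B v) (fun β hβ => by simpa using hvI β hβ) hz
  have hxz : 0 ≤ B x z := nonneg_of_mem_hull hxI hz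
  have hxv : 0 ≤ B x v := nonneg_of_mem_hull hxI hv
  have hvz0 : B v z = 0 := by
    have : B z z = B v z - t * B x z := by simp [hzdef]
    nlinarith
  have hzI : ∀ β ∈ I, 0 ≤ (-B z) β := by
    intro β hβ
    have : (-B z) β = t * B x β - B v β := by simp [hzdef]
    nlinarith [hvI β hβ, hxI β hβ]
  have hz0 : z = 0 := by
    refine hnd z (PointedCone.hull_le_span ℝ _ hz) fun β hβ => ?_
    by_contra hzβ
    have hpos : 0 < (-B z) β := (hzI β hβ).lt_of_ne fun h => hzβ (by simpa using h.symm)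
    exact hvneg.not_ge (hbd (-B z) hzI ⟨β, hβ, hpos⟩ v hv (by simp [hB.eq z v, hvz0]))
  have hvv : B v v = t * B x v := by
    have : B z v = B v v - t * B x v := by simp [hzdef]
    rwa [hz0, map_zero, LinearMap.zero_apply, eq_comm, sub_eq_zero] at this
  nlinarith

/-! ### Weights -/

variable {B : LinearMap.BilinForm ℝ V} {Δ I J : Finset V} {ω ω' : V}

lemma IsRootBasis.apply_nonpos (hΔ : IsRootBasis B Δ) :
    ∀ α ∈ Δ, ∀ β ∈ Δ, α ≠ β → B α β ≤ 0 := by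
  intro α hα β hβ hαβ
  rcases hΔ.offdiag α hα β hβ hαβ with hle | ⟨k, hk, hcos⟩
  · linarith
  · have hk2 : (2 : ℝ) ≤ k := by exact_mod_cast hk
    have hle : Real.pi / k ≤ Real.pi / 2 :=
      div_le_div_of_nonneg_left Real.pi_pos.le two_pos hk2
    have : 0 ≤ Real.pi / k := by positivity
    rw [hcos, neg_nonpos]
    exact Real.cos_nonneg_of_neg_pi_div_two_le_of_le (by linarith [Real.pi_pos]) hle

lemma IsRootBasis.eq_zero_of_mem_hull_of_neg_mem_hull (hΔ : IsRootBasis B Δ) {x : V}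
    (hx : x ∈ PointedCone.hull ℝ (Δ : Set V)) (hnx : -x ∈ PointedCone.hull ℝ (Δ : Set V)) :
    x = 0 := by
  rw [← SetLike.mem_coe, coe_hull_eq_cone] at hx hnx
  obtain ⟨c, hc, rfl⟩ := hx
  obtain ⟨d, hd, hcd⟩ := hnx
  have hsum : ∑ α ∈ Δ, (c α + d α) • α = 0 := by
    simp only [add_smul, Finset.sum_add_distrib, ← hcd, add_neg_cancel]
  have hzero := hΔ.posIndep (fun α => c α + d α) (fun α hα => add_nonneg (hc α hα) (hd α hα)) hsum
  refine Finset.sum_eq_zero fun α hα => ?_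
  rw [((add_eq_zero_iff_of_nonneg (hc α hα) (hd α hα)).1 (hzero α hα)).1, zero_smul]

lemma IsWeight.eq_zero_or_one_le (hω : IsWeight B Δ I ω) {γ : V} (hγ : γ ∈ Δ) :
    B γ ω = 0 ∨ 1 ≤ B γ ω := by
  by_cases hγI : γ ∈ I
  · exact .inl (hω.2.1 γ hγI)
  · exact .inr (hω.2.2.2.1 γ hγ hγI)

lemma IsWeight.apply_nonneg (hω : IsWeight B Δ I ω) (hB : B.IsSymm) :
    ∀ γ ∈ Δ, 0 ≤ B ω γ := by
  intro γ hγ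
  rw [hB.eq]
  rcases hω.eq_zero_or_one_le hγ with h | h <;> linarith

lemma IsWeight.apply_eq_zero (hω : IsWeight B Δ I ω) (hB : B.IsSymm) : ∀ γ ∈ I, B ω γ = 0 :=
  fun γ hγ => (hB.eq ω γ).trans (hω.2.1 γ hγ)

lemma IsWeight.ne_zero (hω : IsWeight B Δ I ω) : ω ≠ 0 := by
  rintro rfl
  obtain ⟨_, _, _, _, α, _, _, hα⟩ := hω
  simp at hα

lemma IsWeight.mem_span_iff [FiniteDimensional ℝ V] (hω : IsWeight B Δ I ω) (hB : B.IsSymm)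
    {x : V} : x ∈ Submodule.span ℝ (I : Set V) ↔ B ω x = 0 := by
  have hle : Submodule.span ℝ (I : Set V) ≤ LinearMap.ker (B ω) :=
    Submodule.span_le.2 (hω.apply_eq_zero hB)
  have hker : LinearMap.ker (B ω) ≠ ⊤ := by
    obtain ⟨_, _, _, _, α, _, _, hα⟩ := hω
    rw [Ne, LinearMap.ker_eq_top]
    intro h
    simp [hB.eq α ω, h] at hα
  have hlt := Submodule.finrank_lt hker
  have hrank := hω.1.2.2
  rw [Submodule.eq_of_le_of_finrank_le hle (by omega), LinearMap.mem_ker]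

lemma IsWeight.eq_of_subset [FiniteDimensional ℝ V] (hω : IsWeight B Δ I ω)
    (hω' : IsWeight B Δ J ω') (hB : B.IsSymm) (hnd : B.Nondegenerate) (hJI : J ⊆ I) :
    ω = ω' := by
  have hspan : Submodule.span ℝ (J : Set V) = Submodule.span ℝ (I : Set V) := by
    have hI := hω.1.2.2
    have hJ := hω'.1.2.2
    exact Submodule.eq_of_le_of_finrank_eq (Submodule.span_mono (Finset.coe_subset.2 hJI))
      (by omega)
  have hker (x : V) : B ω x = 0 ↔ B ω' x = 0 := by
    rw [← hω.mem_span_iff hB, ← hω'.mem_span_iff hB, hspan]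
  obtain ⟨α, hα, -, hαω⟩ := hω.2.2.2.2
  obtain ⟨β, hβ, -, hβω'⟩ := hω'.2.2.2.2
  rw [hB.eq] at hαω hβω'
  have hprop (x : V) : B ω' x = B ω' α * B ω x := by
    have : B ω (x - B ω x • α) = 0 := by simp [hαω]
    rw [hker] at this
    simp only [map_sub, map_smul, smul_eq_mul] at this
    linarith
  have one_le {η : V} {K : Finset V} (hη : IsWeight B Δ K η) {γ : V} (hγ : γ ∈ Δ)
      (h : B η γ ≠ 0) : 1 ≤ B η γ := by
    rw [hB.eq] at h ⊢
    exact (hη.eq_zero_or_one_le hγ).resolve_left h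
  have hω'α : 1 ≤ B ω' α := one_le hω' hα (mt (hker α).2 (by simp [hαω]))
  have hωβ : 1 ≤ B ω β := one_le hω hβ (mt (hker β).1 (by simp [hβω']))
  have hαeq : B ω' α = 1 := by nlinarith [hprop β]
  refine sub_eq_zero.1 (hnd.1 _ fun x => ?_)
  rw [map_sub, LinearMap.sub_apply, hprop x, hαeq]
  ring

lemma IsWeight.apply_self_nonpos [FiniteDimensional ℝ V] (hω : IsWeight B Δ I ω)
    (hB : B.IsSymm) (hpsd : ∀ x ∈ Submodule.span ℝ (I : Set V), 0 ≤ B x x)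
    (hneg : ∃ x, B x x < 0) : B ω ω ≤ 0 := by
  by_contra! hpos
  obtain ⟨x, hx⟩ := hneg
  have hmem : B ω ω • x - B ω x • ω ∈ Submodule.span ℝ (I : Set V) := by
    rw [hω.mem_span_iff hB]
    simp [mul_comm]
  have hnonneg : 0 ≤ B ω ω * (B ω ω * B x x - B ω x ^ 2) := by
    convert hpsd _ hmem using 1
    simp only [map_sub, map_smul, LinearMap.sub_apply, LinearMap.smul_apply, smul_eq_mul,
      hB.eq x ω]
    ring
  nlinarith [nonneg_of_mul_nonneg_right hnonneg hpos, mul_pos hpos (neg_pos.2 hx)]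

lemma NonnegOnBoundary.neg_mem_hull_of_isotropic {s : Set V} (hbd : NonnegOnBoundary B s)
    (hs : s.Finite) (hB : B.IsSymm) {v x : V} (hv : v ∈ PointedCone.hull ℝ s)
    (hvneg : B v v < 0) (hx : x ∈ Submodule.span ℝ s) (hxx : B x x = 0) (hxv : B x v = 0) :
    -x ∈ PointedCone.hull ℝ s := by
  by_contra hnx
  obtain ⟨t, -, -, hzz⟩ := hbd.exists_sub_smul_mem_hull hs hv hx hnx
  have : B (v - t • x) (v - t • x) = B v v := by simp [hxx, hxv, hB.eq v x]
  linarith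

section IndefiniteFacet

variable [FiniteDimensional ℝ V]

lemma IsWeight.apply_self_ne_zero (hω : IsWeight B Δ I ω) (hB : B.IsSymm)
    (hΔ : IsRootBasis B Δ) (hbd : NonnegOnBoundary B (I : Set V))
    (hneg : ∃ x ∈ Submodule.span ℝ (I : Set V), B x x < 0) : B ω ω ≠ 0 := by
  intro hωω
  have hIΔ := hω.1.1
  obtain ⟨v, hv, hvneg, -⟩ := exists_mem_hull_neg hB
    (fun α hα β hβ => hΔ.apply_nonpos α (hIΔ hα) β (hIΔ hβ)) hneg
  have hωI := (hω.mem_span_iff hB).2 hωω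
  have hωv := (hω.mem_span_iff hB).1 (PointedCone.hull_le_span ℝ _ hv)
  have hmono : PointedCone.hull ℝ (I : Set V) ≤ PointedCone.hull ℝ (Δ : Set V) :=
    Submodule.span_mono (Finset.coe_subset.2 hIΔ)
  have hneg_mem : -ω ∈ PointedCone.hull ℝ (I : Set V) :=
    hbd.neg_mem_hull_of_isotropic I.finite_toSet hB hv hvneg hωI hωω hωv
  have hmem : - -ω ∈ PointedCone.hull ℝ (I : Set V) :=
    hbd.neg_mem_hull_of_isotropic I.finite_toSet hB hv hvneg (neg_mem hωI) (by simp [hωω])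
      (by simp [hωv])
  rw [neg_neg] at hmem
  exact hω.ne_zero (hΔ.eq_zero_of_mem_hull_of_neg_mem_hull (hmono hmem) (hmono hneg_mem))

lemma IsWeight.sub_smul_mem_span (hω : IsWeight B Δ I ω) (hB : B.IsSymm) (hωω : B ω ω ≠ 0)
    (x : V) : x - (B ω x / B ω ω) • ω ∈ Submodule.span ℝ (I : Set V) := by
  rw [hω.mem_span_iff hB]
  simp [hωω]

lemma IsWeight.eq_zero_of_mem_span (hω : IsWeight B Δ I ω) (hB : B.IsSymm)
    (hnd : B.Nondegenerate) (hωω : B ω ω ≠ 0) {z : V}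
    (hz : z ∈ Submodule.span ℝ (I : Set V)) (hzI : ∀ β ∈ I, B z β = 0) : z = 0 := by
  refine hnd.1 z fun y => ?_
  have hker : Submodule.span ℝ (I : Set V) ≤ LinearMap.ker (B z) := Submodule.span_le.2 hzI
  have hzω : B z ω = 0 := (hB.eq z ω).trans ((hω.mem_span_iff hB).1 hz)
  simpa [hzω] using hker (hω.sub_smul_mem_span hB hωω y)

lemma IsWeight.sub_smul_mem_hull (hω : IsWeight B Δ I ω) (hB : B.IsSymm)
    (hnd : B.Nondegenerate) (hΔ : IsRootBasis B Δ) (hbd : NonnegOnBoundary B (I : Set V))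
    (hneg : ∃ x ∈ Submodule.span ℝ (I : Set V), B x x < 0) {α : V} (hα : α ∈ Δ) (hαI : α ∉ I) :
    let α' := α - (B ω α / B ω ω) • ω
    α' ∈ PointedCone.hull ℝ (I : Set V) ∧ B α' α' ≤ 0 := by
  intro α'
  have hIΔ := hω.1.1
  have hωω := hω.apply_self_ne_zero hB hΔ hbd hneg
  have hα'I : ∀ β ∈ I, 0 ≤ B (-α') β := by
    intro β hβ
    have := hΔ.apply_nonpos α hα β (hIΔ hβ) (by rintro rfl; exact hαI hβ)
    simpa [α', hω.apply_eq_zero hB β hβ] using this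
  have hmem := hbd.neg_mem_hull hB (fun α hα β hβ => hΔ.apply_nonpos α (hIΔ hα) β (hIΔ hβ)) hneg
    (fun z => hω.eq_zero_of_mem_span hB hnd hωω) (neg_mem (hω.sub_smul_mem_span hB hωω α)) hα'I
  rw [neg_neg] at hmem
  have hα'α' := nonneg_of_mem_hull hα'I hmem
  rw [map_neg, LinearMap.neg_apply, neg_nonneg] at hα'α'
  exact ⟨hmem, hα'α'⟩

lemma IsWeight.apply_self_mem_Ioc (hω : IsWeight B Δ I ω) (hB : B.IsSymm)
    (hnd : B.Nondegenerate) (hΔ : IsRootBasis B Δ) (hbd : NonnegOnBoundary B (I : Set V))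
    (hneg : ∃ x ∈ Submodule.span ℝ (I : Set V), B x x < 0) : B ω ω ∈ Set.Ioc 0 1 := by
  obtain ⟨α, hα, hαI, hαω⟩ := hω.2.2.2.2
  obtain ⟨-, hα'⟩ := hω.sub_smul_mem_hull hB hnd hΔ hbd hneg hα hαI
  have hωω := hω.apply_self_ne_zero hB hΔ hbd hneg
  have hinv : 1 ≤ (B ω ω)⁻¹ := by
    simp only [hB.eq ω α, hαω, map_sub, map_smul, LinearMap.sub_apply, LinearMap.smul_apply,
      smul_eq_mul, hΔ.unit α hα, one_div] at hα'
    rw [inv_mul_cancel₀ hωω] at hα'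
    linarith
  exact ⟨inv_pos.1 (by linarith), by simpa using inv_anti₀ one_pos hinv⟩

lemma IsWeight.apply_nonpos_of_indefinite (hω : IsWeight B Δ I ω) (hω' : IsWeight B Δ J ω')
    (hB : B.IsSymm) (hnd : B.Nondegenerate) (hΔ : IsRootBasis B Δ)
    (hbd : NonnegOnBoundary B (I : Set V))
    (hneg : ∃ x ∈ Submodule.span ℝ (I : Set V), B x x < 0) (hne : ω ≠ ω') : B ω ω' ≤ 0 := by
  obtain ⟨α, hαJ, hαI⟩ := Finset.not_subset.1 (mt (hω.eq_of_subset hω' hB hnd) hne)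
  have hα := hω'.1.1 hαJ
  obtain ⟨hα', -⟩ := hω.sub_smul_mem_hull hB hnd hΔ hbd hneg hα hαI
  have hcoef : 0 < B ω α / B ω ω := by
    refine div_pos ?_ (hω.apply_self_mem_Ioc hB hnd hΔ hbd hneg).1
    rw [hB.eq]
    exact hω.2.2.1 α hα hαI
  have : 0 ≤ B ω' (α - (B ω α / B ω ω) • ω) :=
    nonneg_of_mem_hull (fun β hβ => hω'.apply_nonneg hB β (hω.1.1 hβ)) hα'
  rw [map_sub, map_smul, smul_eq_mul, hω'.apply_eq_zero hB α hαJ, zero_sub, neg_nonneg] at this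
  rw [hB.eq]
  exact nonpos_of_mul_nonpos_right this hcoef

end IndefiniteFacet

lemma IsWeight.apply_nonpos_of_psd [FiniteDimensional ℝ V] (hω : IsWeight B Δ I ω)
    (hω' : IsWeight B Δ J ω') (hB : B.IsSymm) (hΔ : IsRootBasis B Δ)
    (hpsd : ∀ x ∈ Submodule.span ℝ (I : Set V), 0 ≤ B x x) (hω'ω' : B ω' ω' ≤ 0)
    (hneg : ∃ x, B x x < 0) : B ω ω' ≤ 0 := by
  by_contra! hpos
  obtain ⟨x, hx⟩ := hneg
  obtain ⟨v, hv, hvneg, -⟩ := exists_mem_hull_neg hB hΔ.apply_nonpos ⟨x, by simp [hΔ.spans], hx⟩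
  have hωv : 0 ≤ B ω v := nonneg_of_mem_hull (hω.apply_nonneg hB) hv
  have hω'v : 0 ≤ B ω' v := nonneg_of_mem_hull (hω'.apply_nonneg hB) hv
  have hmem : B ω ω' • v - B ω v • ω' ∈ Submodule.span ℝ (I : Set V) := by
    rw [hω.mem_span_iff hB]
    simp [mul_comm]
  have hnonneg : 0 ≤ B ω ω' ^ 2 * B v v - 2 * (B ω ω' * (B ω v * B ω' v)) +
      B ω v ^ 2 * B ω' ω' := by
    convert hpsd _ hmem using 1
    simp only [map_sub, map_smul, LinearMap.sub_apply, LinearMap.smul_apply, smul_eq_mul,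
      hB.eq v ω']
    ring
  have : B ω ω' ^ 2 * B v v < 0 := mul_neg_of_pos_of_neg (by positivity) hvneg
  have : 0 ≤ B ω ω' * (B ω v * B ω' v) := by positivity
  have : B ω v ^ 2 * B ω' ω' ≤ 0 := mul_nonpos_of_nonneg_of_nonpos (sq_nonneg _) hω'ω'
  linarith

section Level

variable [FiniteDimensional ℝ V] (hB : B.IsSymm) (hnd : B.Nondegenerate) (hΔ : IsRootBasis B Δ)
  (hbd : ∀ I, IsFacial Δ I 1 → NonnegOnBoundary B (I : Set V)) (hneg : ∃ x, B x x < 0)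

include hB hnd hΔ hbd hneg

theorem IsWeight.apply_self_le_one (hω : IsWeight B Δ I ω) : B ω ω ≤ 1 := by
  by_cases hpsd : ∀ x ∈ Submodule.span ℝ (I : Set V), 0 ≤ B x x
  · exact (hω.apply_self_nonpos hB hpsd hneg).trans zero_le_one
  · push Not at hpsd
    exact (hω.apply_self_mem_Ioc hB hnd hΔ (hbd I hω.1) hpsd).2

theorem IsWeight.apply_nonpos (hω : IsWeight B Δ I ω) (hω' : IsWeight B Δ J ω')
    (hne : ω ≠ ω') : B ω ω' ≤ 0 := by
  by_cases hpsd : ∀ x ∈ Submodule.span ℝ (I : Set V), 0 ≤ B x x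
  · by_cases hpsd' : ∀ x ∈ Submodule.span ℝ (J : Set V), 0 ≤ B x x
    · exact hω.apply_nonpos_of_psd hω' hB hΔ hpsd (hω'.apply_self_nonpos hB hpsd' hneg) hneg
    · push Not at hpsd'
      rw [hB.eq]
      exact hω'.apply_nonpos_of_indefinite hω hB hnd hΔ (hbd J hω'.1) hpsd' hne.symm
  · push Not at hpsd
    exact hω.apply_nonpos_of_indefinite hω' hB hnd hΔ (hbd I hω.1) hpsd hne

end Level

/-! ### Products of two reflections -/

section Chebyshev

open Polynomial.Chebyshev

lemma eval_S_nonneg_of_two_le {c : ℝ} (hc : 2 ≤ c) (n : ℕ) : 0 ≤ (S ℝ (n - 1)).eval c := by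
  suffices h : 0 ≤ (S ℝ (n - 1)).eval c ∧ (S ℝ (n - 1)).eval c ≤ (S ℝ n).eval c from h.1
  induction n with
  | zero => simp
  | succ n ih =>
    have hrec : (S ℝ (n + 1)).eval c = c * (S ℝ n).eval c - (S ℝ (n - 1)).eval c := by
      simp [S_add_one]
    rw [Nat.cast_succ, add_sub_cancel_right, hrec]
    exact ⟨ih.1.trans ih.2, by nlinarith [ih.1, ih.2]⟩

lemma sin_pi_div_pos {m : ℕ} (hm : 2 ≤ m) : 0 < Real.sin (Real.pi / m) := by
  have hm' : (2 : ℝ) ≤ m := by exact_mod_cast hm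
  exact Real.sin_pos_of_pos_of_lt_pi (by positivity) (div_lt_self Real.pi_pos (by linarith))

lemma eval_S_two_mul_cos_nonneg {m n : ℕ} (hm : 2 ≤ m) (hn : n ≤ m) :
    0 ≤ (S ℝ (n - 1)).eval (2 * Real.cos (Real.pi / m)) := by
  have hn' : (n : ℝ) ≤ m := by exact_mod_cast hn
  refine nonneg_of_mul_nonneg_left ?_ (sin_pi_div_pos hm)
  rw [S_two_mul_real_cos]
  push_cast
  rw [sub_add_cancel]
  refine Real.sin_nonneg_of_nonneg_of_le_pi (by positivity) ?_
  rw [mul_div_left_comm]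
  exact mul_le_of_le_one_right Real.pi_pos.le (div_le_one_of_le₀ hn' (by positivity))

lemma reflection_apply (B : LinearMap.BilinForm ℝ V) (a x : V) :
    reflection B a x = x - (2 * B a x) • a := by
  simp [reflection, smul_smul, mul_comm]

lemma reflection_involutive {a : V} (ha : B a a = 1) : Function.Involutive (reflection B a) := by
  intro x
  simp only [reflection_apply, map_sub, map_smul, ha]
  module

lemma reflection_apply_reflection (hB : B.IsSymm) {a : V} (ha : B a a = 1) (x y : V) :
    B (reflection B a x) (reflection B a y) = B x y := by
  simp only [reflection_apply, map_sub, map_smul, LinearMap.sub_apply, LinearMap.smul_apply,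
    smul_eq_mul, ha, hB.eq x a]
  ring

lemma reflection_apply_eval_S {a : V} (ha : B a a = 1) (b : V) (n : ℤ) :
    reflection B a ((S ℝ (n - 1)).eval (-2 * B a b) • a + (S ℝ n).eval (-2 * B a b) • b) =
      (S ℝ (n + 1)).eval (-2 * B a b) • a + (S ℝ n).eval (-2 * B a b) • b := by
  simp only [reflection_apply, map_add, map_smul, ha, S_add_one, Polynomial.eval_sub,
    Polynomial.eval_mul, Polynomial.eval_X]
  module

variable {a b : V} {r s : V ≃ₗ[ℝ] V}

lemma mul_pow_apply_eq_eval_S (hB : B.IsSymm) (ha : B a a = 1) (hb : B b b = 1)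
    (hr : (r : V →ₗ[ℝ] V) = reflection B a) (hs : (s : V →ₗ[ℝ] V) = reflection B b) (k : ℕ) :
    ((r * s) ^ k) a =
      (S ℝ (2 * k)).eval (-2 * B a b) • a + (S ℝ (2 * k - 1)).eval (-2 * B a b) • b := by
  induction k with
  | zero => simp
  | succ k ih =>
    have hstep : r (s ((S ℝ (2 * k)).eval (-2 * B a b) • a +
        (S ℝ (2 * k - 1)).eval (-2 * B a b) • b)) =
        (S ℝ (2 * k + 1 + 1)).eval (-2 * B a b) • a +
          (S ℝ (2 * k + 1)).eval (-2 * B a b) • b := by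
      rw [← LinearEquiv.coe_coe s, hs, add_comm, hB.eq a b, reflection_apply_eval_S hb,
        ← LinearEquiv.coe_coe r, hr, add_comm, hB.eq b a, ← reflection_apply_eval_S ha,
        add_sub_cancel_right]
    rw [pow_succ', LinearEquiv.mul_apply, ih, LinearEquiv.mul_apply, hstep]
    push_cast
    ring_nf

lemma mul_pow_apply_eq_self (hB : B.IsSymm) (ha : B a a = 1) (hb : B b b = 1)
    (hr : (r : V →ₗ[ℝ] V) = reflection B a) (hs : (s : V →ₗ[ℝ] V) = reflection B b) {m : ℕ}
    (hm : 2 ≤ m) (hab : B a b = -Real.cos (Real.pi / m)) : ((r * s) ^ m) a = a := by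
  have hsin := (sin_pi_div_pos hm).ne'
  have hm0 : (m : ℝ) ≠ 0 := by positivity
  have hS : (S ℝ (2 * m)).eval (2 * Real.cos (Real.pi / m)) = 1 := by
    refine mul_right_cancel₀ hsin ?_
    rw [S_two_mul_real_cos, one_mul, ← Real.sin_add_two_pi (Real.pi / m)]
    congr 1
    push_cast
    field_simp
    ring
  have hS' : (S ℝ (2 * m - 1)).eval (2 * Real.cos (Real.pi / m)) = 0 := by
    refine mul_right_cancel₀ hsin ?_
    rw [S_two_mul_real_cos, zero_mul, ← Real.sin_two_pi]
    congr 1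
    push_cast
    field_simp
    ring
  rw [mul_pow_apply_eq_eval_S hB ha hb hr hs, hab, neg_mul_neg, hS, hS', one_smul, zero_smul,
    add_zero]

lemma mul_pow_apply_eq_self_of_orthogonal (hr : (r : V →ₗ[ℝ] V) = reflection B a)
    (hs : (s : V →ₗ[ℝ] V) = reflection B b) {x : V} (hax : B a x = 0) (hbx : B b x = 0) (k : ℕ) :
    ((r * s) ^ k) x = x := by
  have hfix : (r * s) x = x := by
    rw [LinearEquiv.mul_apply, ← LinearEquiv.coe_coe s, hs, reflection_apply, hbx, mul_zero,
      zero_smul, sub_zero, ← LinearEquiv.coe_coe r, hr, reflection_apply, hax, mul_zero,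
      zero_smul, sub_zero]
  induction k with
  | zero => rfl
  | succ k ih => rw [pow_succ, LinearEquiv.mul_apply, hfix, ih]

lemma mul_self_eq_one_of_eq_reflection (ha : B a a = 1)
    (hr : (r : V →ₗ[ℝ] V) = reflection B a) : r * r = 1 := by
  ext x
  have hinv := reflection_involutive ha x
  rwa [← hr] at hinv

lemma mul_pow_eq_one (hB : B.IsSymm) (ha : B a a = 1) (hb : B b b = 1)
    (hr : (r : V →ₗ[ℝ] V) = reflection B a) (hs : (s : V →ₗ[ℝ] V) = reflection B b) {m : ℕ}
    (hm : 2 ≤ m) (hab : B a b = -Real.cos (Real.pi / m)) : (r * s) ^ m = 1 := by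
  have hfa := mul_pow_apply_eq_self hB ha hb hr hs hm hab
  have hfb : ((r * s) ^ m) b = b := by
    have hinv : ((r * s) ^ m)⁻¹ = (s * r) ^ m := by
      rw [← inv_pow, mul_inv_rev,
        inv_eq_of_mul_eq_one_left (mul_self_eq_one_of_eq_reflection ha hr),
        inv_eq_of_mul_eq_one_left (mul_self_eq_one_of_eq_reflection hb hs)]
    have hfix := mul_pow_apply_eq_self hB hb ha hs hr hm (by rwa [hB.eq])
    rw [← hinv] at hfix
    nth_rw 1 [← hfix]
    rw [← LinearEquiv.mul_apply, mul_inv_cancel]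
    rfl
  have hdet : 1 - B a b ^ 2 ≠ 0 := by
    rw [hab, neg_sq, ← Real.sin_sq]
    exact pow_ne_zero 2 (sin_pi_div_pos hm).ne'
  ext x
  set p := (B a x - B a b * B b x) / (1 - B a b ^ 2) with hp
  set q := (B b x - B a b * B a x) / (1 - B a b ^ 2) with hq
  have haperp : B a (x - p • a - q • b) = 0 := by
    simp only [map_sub, map_smul, smul_eq_mul, ha, hp, hq]
    field_simp
    ring
  have hbperp : B b (x - p • a - q • b) = 0 := by
    simp only [map_sub, map_smul, smul_eq_mul, hb, hB.eq b a, hp, hq]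
    field_simp
    ring
  have hperp := mul_pow_apply_eq_self_of_orthogonal hr hs haperp hbperp m
  have hx : x = x - p • a - q • b + p • a + q • b := by abel
  nth_rw 1 [hx]
  rw [map_add, map_add, map_smul, map_smul, hperp, hfa, hfb, ← hx]
  rfl

end Chebyshev

/-! ### Geometric representations of Coxeter groups -/

section Coxeter

open CoxeterSystem Polynomial.Chebyshev

variable {ι W : Type*} [Group W] {M : CoxeterMatrix ι} {cs : CoxeterSystem M W}

lemma induction_of_not_isRightDescent (cs : CoxeterSystem M W) {p : W → Prop} (one : p 1)
    (mul_simple : ∀ w i, ¬ cs.IsRightDescent w i → p w → p (w * cs.simple i)) (w : W) : p w := by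
  induction hn : cs.length w generalizing w with
  | zero => rwa [cs.length_eq_zero_iff.1 hn]
  | succ n ih =>
    have hw : w ≠ 1 := by
      rintro rfl
      simp at hn
    obtain ⟨i, hi⟩ := cs.exists_rightDescent_of_ne_one hw
    rw [← cs.simple_mul_simple_cancel_right (w := w) i]
    refine mul_simple _ i (cs.isRightDescent_iff_not_isRightDescent_mul.1 hi) (ih _ ?_)
    rw [cs.isRightDescent_iff] at hi
    omega

lemma exists_eq_mul_wordProd_alternatingWord {w : W} {i : ι} (hi : ¬ cs.IsRightDescent w i)
    (j : ι) : ∃ v k, w = v * cs.wordProd (alternatingWord i j k) ∧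
      cs.length v + k = cs.length w ∧ ¬ cs.IsRightDescent v i ∧ ¬ cs.IsRightDescent v j := by
  set lengths : Set ℕ := {k | ∃ v, w = v * cs.wordProd (alternatingWord i j k) ∧
    cs.length v + k = cs.length w}
  have hne : lengths.Nonempty := ⟨0, w, by simp [alternatingWord], by simp⟩
  have hbdd : BddAbove lengths := ⟨cs.length w, fun k ⟨v, _, hv⟩ => by omega⟩
  obtain ⟨v, hw, hv⟩ := Nat.sSup_mem hne hbdd
  set k := sSup lengths
  have hnext : ¬ cs.IsRightDescent v (if Even k then j else i) := by
    intro hdesc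
    rw [cs.isRightDescent_iff] at hdesc
    have hmem : k + 1 ∈ lengths := by
      refine ⟨v * cs.simple (if Even k then j else i), ?_, by omega⟩
      rw [alternatingWord_succ', cs.wordProd_cons, ← mul_assoc,
        cs.simple_mul_simple_cancel_right, ← hw]
    exact absurd (le_csSup hbdd hmem) (by simp [k])
  have hfirst : ¬ cs.IsRightDescent v (if Even k then i else j) := by
    intro hdesc
    rcases hk : k with _ | n
    · simp only [hk, alternatingWord, cs.wordProd_nil, mul_one, Even.zero, if_true] at hw hdesc
      rw [hw] at hi
      exact hi hdesc
    · rw [cs.isRightDescent_iff] at hdesc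
      have hw' : w = v * cs.simple (if Even k then i else j) *
          cs.wordProd (alternatingWord i j n) := by
        rw [hw, hk, alternatingWord_succ', cs.wordProd_cons, ← mul_assoc]
        simp only [Nat.even_add_one, ite_not]
      have hle := cs.length_mul_le (v * cs.simple (if Even k then i else j))
        (cs.wordProd (alternatingWord i j n))
      have hlen := cs.length_wordProd_le (alternatingWord i j n)
      rw [length_alternatingWord] at hlen
      rw [← hw'] at hle
      omega
  refine ⟨v, k, hw, hv, ?_⟩
  split_ifs at hnext hfirst
  · exact ⟨hfirst, hnext⟩
  · exact ⟨hnext, hfirst⟩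

lemma succ_le_of_eq_mul_wordProd_alternatingWord {v w : W} {i j : ι} {k : ℕ}
    (hi : ¬ cs.IsRightDescent w i) (hw : w = v * cs.wordProd (alternatingWord i j k))
    (hlen : cs.length v + k = cs.length w) (hM : M i j ≠ 0) : k + 1 ≤ M i j := by
  by_contra! hlt
  rw [M.symmetric] at hM hlt
  refine cs.not_isReduced_alternatingWord j i hM hlt ?_
  have hwi : w * cs.simple i = v * cs.wordProd (alternatingWord j i (k + 1)) := by
    rw [alternatingWord_succ, cs.wordProd_concat, hw, mul_assoc]
  have hle := cs.length_mul_le v (cs.wordProd (alternatingWord j i (k + 1)))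
  have hword := cs.length_wordProd_le (alternatingWord j i (k + 1))
  rw [← hwi, cs.not_isRightDescent_iff.1 hi] at hle
  rw [length_alternatingWord] at hword
  rw [CoxeterSystem.IsReduced, length_alternatingWord]
  omega

/-- `ρ` is a geometric representation of the Coxeter group `W` on `(V, B)`: the simple generators
act as the reflections in the vectors `e i`, and `B (e i) (e j)` is `-cos (π / M i j)` if `M i j`
is finite. Mathlib encodes an infinite order as `M i j = 0`; then any value `≤ -1` is allowed. The
diagonal `M i i = 1` makes the `e i` unit vectors. -/
structure IsGeometricRep (B : LinearMap.BilinForm ℝ V) (cs : CoxeterSystem M W) (e : ι → V)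
    (ρ : W →* (V ≃ₗ[ℝ] V)) : Prop where
  isSymm : B.IsSymm
  apply_eq : ∀ i j, M i j ≠ 0 → B (e i) (e j) = -Real.cos (Real.pi / M i j)
  apply_le : ∀ i j, M i j = 0 → B (e i) (e j) ≤ -1
  map_simple : ∀ i, (ρ (cs.simple i) : V →ₗ[ℝ] V) = reflection B (e i)

namespace IsGeometricRep

variable {e : ι → V} {ρ : W →* (V ≃ₗ[ℝ] V)} (h : IsGeometricRep B cs e ρ)

include h

lemma apply_self (i : ι) : B (e i) (e i) = 1 := by
  rw [h.apply_eq i i (by simp)]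
  simp

lemma map_mul_simple_apply (w : W) (i : ι) (x : V) :
    ρ (w * cs.simple i) x = ρ w x - (2 * B (e i) x) • ρ w (e i) := by
  rw [map_mul, LinearEquiv.mul_apply, ← LinearEquiv.coe_coe (ρ (cs.simple i)), h.map_simple,
    reflection_apply, map_sub, map_smul]

lemma map_apply_map (w : W) (x y : V) : B (ρ w x) (ρ w y) = B x y := by
  induction w using cs.simple_induction_left with
  | one => simp
  | mul_simple_left w i ih =>
    rw [← ih, ← reflection_apply_reflection h.isSymm (h.apply_self i) (ρ w x), ← h.map_simple,
      map_mul]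
    rfl

lemma eval_S_nonneg {i j : ι} (hij : i ≠ j) {n : ℕ} (hn : M i j ≠ 0 → n ≤ M i j) :
    0 ≤ (S ℝ (n - 1)).eval (-2 * B (e i) (e j)) := by
  by_cases hM : M i j = 0
  · exact eval_S_nonneg_of_two_le (by linarith [h.apply_le i j hM]) n
  · have hM2 : 2 ≤ M i j := by
      have := M.off_diagonal i j hij
      omega
    rw [h.apply_eq i j hM, neg_mul_neg]
    exact eval_S_two_mul_cos_nonneg hM2 (hn hM)

lemma exists_map_wordProd_alternatingWord_apply {i j : ι} (hij : i ≠ j) {k : ℕ}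
    (hk : M i j ≠ 0 → k + 1 ≤ M i j) : ∃ p q : ℝ, 0 ≤ p ∧ 0 ≤ q ∧
      ρ (cs.wordProd (alternatingWord i j k)) (e i) = p • e i + q • e j := by
  have hpow (n : ℕ) := mul_pow_apply_eq_eval_S h.isSymm (h.apply_self i) (h.apply_self j)
    (h.map_simple i) (h.map_simple j) n
  simp only [← map_mul, ← map_pow] at hpow
  have hnonneg (n : ℕ) (hn : n ≤ k + 1) := h.eval_S_nonneg hij fun hM => hn.trans (hk hM)
  rw [cs.prod_alternatingWord_eq_mul_pow]
  obtain ⟨n, rfl | rfl⟩ := k.even_or_odd'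
  · rw [if_pos (even_two_mul n), one_mul, Nat.mul_div_cancel_left n two_pos]
    exact ⟨_, _, by simpa using hnonneg (2 * n + 1) le_rfl,
      by simpa using hnonneg (2 * n) (by omega), hpow n⟩
  · have hdiv : (2 * n + 1) / 2 = n := by omega
    have hodd : ρ (cs.simple j * (cs.simple i * cs.simple j) ^ n) (e i) =
        (S ℝ (2 * n)).eval (-2 * B (e i) (e j)) • e i +
          (S ℝ (2 * n + 1)).eval (-2 * B (e i) (e j)) • e j := by
      rw [map_mul, LinearEquiv.mul_apply, hpow, ← LinearEquiv.coe_coe, h.map_simple, add_comm,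
        h.isSymm.eq (e i) (e j), reflection_apply_eval_S (h.apply_self j), add_comm]
    rw [if_neg (by simp), hdiv]
    refine ⟨_, _, ?_, ?_, hodd⟩
    · simpa using hnonneg (2 * n + 1) (by omega)
    · simpa [add_sub_assoc] using hnonneg (2 * n + 2) le_rfl

theorem map_apply_mem_hull {w : W} {i : ι} (hi : ¬ cs.IsRightDescent w i) :
    ρ w (e i) ∈ PointedCone.hull ℝ (Set.range e) := by
  induction hn : cs.length w using Nat.strong_induction_on generalizing w i with
  | _ n ih =>
  by_cases hw1 : w = 1
  · simpa [hw1] using PointedCone.subset_hull (Set.mem_range_self i)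
  obtain ⟨j, hj⟩ := cs.exists_rightDescent_of_ne_one hw1
  have hij : i ≠ j := by
    rintro rfl
    exact hi hj
  obtain ⟨v, k, hw, hlen, hvi, hvj⟩ := exists_eq_mul_wordProd_alternatingWord hi j
  have hk : k ≠ 0 := by
    rintro rfl
    simp only [alternatingWord, cs.wordProd_nil, mul_one] at hw
    exact hvj (hw ▸ hj)
  obtain ⟨p, q, hp, hq, hpq⟩ := h.exists_map_wordProd_alternatingWord_apply hij
    (succ_le_of_eq_mul_wordProd_alternatingWord hi hw hlen)
  rw [hw, map_mul, LinearEquiv.mul_apply, hpq, map_add, map_smul, map_smul]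
  exact add_mem (Submodule.smul_mem _ ⟨p, hp⟩ (ih _ (by omega) hvi rfl))
    (Submodule.smul_mem _ ⟨q, hq⟩ (ih _ (by omega) hvj rfl))

lemma apply_map_nonneg {x : V} (hx : ∀ i, 0 ≤ B x (e i)) {w : W} {i : ι}
    (hi : ¬ cs.IsRightDescent w i) : 0 ≤ B x (ρ w (e i)) :=
  nonneg_of_mem_hull (Set.forall_mem_range.2 hx) (h.map_apply_mem_hull hi)

theorem apply_map_le {x y : V} (hx : ∀ i, 0 ≤ B x (e i)) (hy : ∀ i, 0 ≤ B y (e i)) (w : W) :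
    B x (ρ w y) ≤ B x y := by
  induction w using induction_of_not_isRightDescent cs with
  | one => simp
  | mul_simple w i hi ih =>
    have hyi := hy i
    rw [h.isSymm.eq] at hyi
    rw [h.map_mul_simple_apply, map_sub, map_smul, smul_eq_mul]
    linarith [mul_nonneg hyi (h.apply_map_nonneg hx hi)]

theorem map_apply_eq_or_apply_map_nonpos {ω : V} (hω : B ω ω ≤ 1)
    (hdom : ∀ i, B (e i) ω = 0 ∨ 1 ≤ B (e i) ω) (w : W) : ρ w ω = ω ∨ B ω (ρ w ω) ≤ 0 := by
  have hnonneg (i : ι) : 0 ≤ B ω (e i) := by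
    rw [h.isSymm.eq]
    rcases hdom i with hi | hi <;> linarith
  induction w using induction_of_not_isRightDescent cs with
  | one => simp
  | mul_simple w i hi ih =>
    have hstep : B ω (ρ (w * cs.simple i) ω) =
        B ω (ρ w ω) - 2 * B (e i) ω * B ω (ρ w (e i)) := by
      rw [h.map_mul_simple_apply, map_sub, map_smul, smul_eq_mul]
    rcases hdom i with hωi | hωi
    · rwa [h.map_mul_simple_apply, hωi, mul_zero, zero_smul, sub_zero]
    right
    rcases ih with hfix | hle
    · have hroot : B ω (ρ w (e i)) = B (e i) ω := by
        nth_rw 1 [← hfix]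
        rw [h.map_apply_map, h.isSymm.eq]
      rw [hstep, hfix, hroot]
      nlinarith
    · rw [hstep]
      nlinarith [h.apply_map_nonneg hnonneg hi]

end IsGeometricRep

lemma IsRootBasis.exists_coxeterMatrix (hB : B.IsSymm) (hΔ : IsRootBasis B Δ) :
    ∃ M : CoxeterMatrix Δ, ∀ α β : Δ, (M α β ≠ 0 → B α β = -Real.cos (Real.pi / M α β)) ∧
      (M α β = 0 → B α β ≤ -1) := by
  classical
  have hexists (b : ℝ) (hb : b ≤ -1 ∨ ∃ k : ℕ, 2 ≤ k ∧ b = -Real.cos (Real.pi / k)) :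
      ∃ m : ℕ, m ≠ 1 ∧ (m ≠ 0 → b = -Real.cos (Real.pi / m)) ∧ (m = 0 → b ≤ -1) := by
    rcases hb with hle | ⟨k, hk, hcos⟩
    · exact ⟨0, by simp, by simp, fun _ => hle⟩
    · exact ⟨k, by omega, fun _ => hcos, by omega⟩
  choose! order order_ne_one apply_eq apply_le using hexists
  have hadm {α β : Δ} (hαβ : α ≠ β) :=
    hΔ.offdiag α α.2 β β.2 (Subtype.coe_injective.ne hαβ)
  refine ⟨⟨fun α β => if α = β then 1 else order (B α β), ?_, by simp, ?_⟩, fun α β => ?_⟩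
  · exact Matrix.IsSymm.ext fun α β => by simp only [eq_comm (a := β), hB.eq (β : V)]
  · intro α β hαβ
    simpa only [if_neg hαβ] using order_ne_one _ (hadm hαβ)
  · rcases eq_or_ne α β with rfl | hαβ
    · simp [hΔ.unit]
    · simp only [if_neg hαβ]
      exact ⟨apply_eq _ (hadm hαβ), apply_le _ (hadm hαβ)⟩

theorem IsRootBasis.exists_isGeometricRep (hB : B.IsSymm) (hΔ : IsRootBasis B Δ) :
    ∃ (M : CoxeterMatrix Δ) (ρ : M.Group →* (V ≃ₗ[ℝ] V)),
      IsGeometricRep B M.toCoxeterSystem Subtype.val ρ ∧ weylGroup B Δ ≤ ρ.range := by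
  obtain ⟨M, hM⟩ := hΔ.exists_coxeterMatrix hB
  let r (α : Δ) : V ≃ₗ[ℝ] V :=
    LinearEquiv.ofInvolutive (reflection B α) (reflection_involutive (hΔ.unit α α.2))
  have hr (α : Δ) : (r α : V →ₗ[ℝ] V) = reflection B α := rfl
  have hlift : M.IsLiftable r := by
    intro α β
    rcases eq_or_ne α β with rfl | hαβ
    · rw [M.diagonal, pow_one, mul_self_eq_one_of_eq_reflection (hΔ.unit α α.2) (hr α)]
    by_cases hzero : M α β = 0
    · rw [hzero, pow_zero]
    · have htwo : 2 ≤ M α β := by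
        have := M.off_diagonal α β hαβ
        omega
      exact mul_pow_eq_one hB (hΔ.unit α α.2) (hΔ.unit β β.2) (hr α) (hr β) htwo
        ((hM α β).1 hzero)
  have hsimple (α : Δ) : M.toCoxeterSystem.lift ⟨r, hlift⟩ (M.toCoxeterSystem.simple α) = r α :=
    M.toCoxeterSystem.lift_apply_simple hlift α
  refine ⟨M, M.toCoxeterSystem.lift ⟨r, hlift⟩,
    ⟨hB, fun α β => (hM α β).1, fun α β => (hM α β).2, fun α => by rw [hsimple, hr]⟩, ?_⟩
  rw [weylGroup, Subgroup.closure_le]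
  rintro g ⟨α, hα, hg⟩
  refine ⟨M.toCoxeterSystem.simple ⟨α, hα⟩, ?_⟩
  rw [hsimple]
  exact LinearEquiv.toLinearMap_injective hg.symm

end Coxeter

/-- Maxwell's inequality (1.15), extended. For a based root
system of level `1` or `2` in a non-degenerate quadratic space, any two
distinct vectors of `Ω` satisfy `B(x,y) ≤ 0`. -/
theorem omega_pairwise_nonpos
    {V : Type*} [AddCommGroup V] [Module ℝ V] [FiniteDimensional ℝ V]
    (B : LinearMap.BilinForm ℝ V) (hsymm : ∀ x y : V, B x y = B y x)
    (hnd : B.Nondegenerate)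
    (Δ : Finset V) (hΔ : IsRootBasis B Δ)
    (hlev : HasLevel B Δ 1 ∨ HasLevel B Δ 2) :
    ∀ x ∈ Omega B Δ, ∀ y ∈ Omega B Δ, x ≠ y → B x y ≤ 0 := by
  have hB : B.IsSymm := ⟨hsymm⟩
  have hbd : ∀ I, IsFacial Δ I 1 → NonnegOnBoundary B (I : Set V) := by
    rcases hlev with ⟨hle, -⟩ | ⟨hle, -⟩
    · exact fun I hI => hI.nonnegOnBoundary_of_levelLE hle
    · exact fun I hI => hI.nonnegOnBoundary hle
  have hneg : ∃ x, B x x < 0 := by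
    have hzero : ¬ LevelLE B Δ 0 := hlev.elim (·.2 0 one_pos) (·.2 0 two_pos)
    simp only [LevelLE, not_forall, not_le] at hzero
    obtain ⟨I, -, x, -, hx⟩ := hzero
    exact ⟨x, hx⟩
  obtain ⟨M, ρ, hρ, hW⟩ := hΔ.exists_isGeometricRep hB
  rintro _ ⟨w₁, hw₁, ω₁, ⟨I, hω₁⟩, rfl⟩ _ ⟨w₂, hw₂, ω₂, ⟨J, hω₂⟩, rfl⟩ hne
  obtain ⟨g₁, rfl⟩ := hW hw₁
  obtain ⟨g₂, rfl⟩ := hW hw₂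
  have htwist : ρ g₂ ω₂ = ρ g₁ (ρ (g₁⁻¹ * g₂) ω₂) := by
    rw [← LinearEquiv.mul_apply, ← map_mul, mul_inv_cancel_left]
  rw [htwist] at hne ⊢
  rw [hρ.map_apply_map]
  rcases eq_or_ne ω₁ ω₂ with rfl | hω
  · refine (hρ.map_apply_eq_or_apply_map_nonpos ?_ ?_ _).resolve_left fun h => hne (by rw [h])
    · exact hω₁.apply_self_le_one hB hnd hΔ hbd hneg
    · exact fun α => hω₁.eq_zero_or_one_le α.2
  · exact (hρ.apply_map_le (fun α => hω₁.apply_nonneg hB α α.2)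
      (fun α => hω₂.apply_nonneg hB α α.2) _).trans
      (hω₁.apply_nonpos hB hnd hΔ hbd hneg hω₂ hω)

end BoydMaxwell
end

section
/- Let 𝒫 ⊂ ℝ^d be a polytope of dimension d ≥ 3 and let x be a point in the exterior of 𝒫 (i.e. x ∉ 𝒫). Then there exist two disjoint faces F and G of 𝒫 and a line L through x that meets both F and G. -/
/-!
Shrink `P` towards `x`, and let `r` be the least ratio in `[0, 1]` for which the shrunken copy `P'`
still meets `P`; it is positive because `x ∉ P`. By minimality `P'` avoids the interior of `P`, so a
hyperplane separates `P'` from `P`. It touches both at a common point `u`, the image of some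
`v ∈ P`. Thus `u` lies on a supporting hyperplane of `P`, and undoing the homothety shows that `v`
lies on the parallel supporting hyperplane on the opposite side. These two hyperplanes cut out
disjoint faces, and `x`, `u`, `v` are collinear.
-/

namespace BoydMaxwell

open AffineMap Set Topology

variable {E : Type*} [AddCommGroup E] [Module ℝ E] {K : Set E} {x : E}

/-- The ratios `r ∈ [0, 1]` for which the homothetic copy of `K` with centre `x` and ratio `r` meets
`K`. The least of them marks how far `K` can be shrunk towards `x` while still meeting `K`. -/
def meetingRatios (x : E) (K : Set E) : Set ℝ :=
  {r ∈ Icc 0 1 | ∃ y ∈ K, homothety x r y ∈ K}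

theorem one_mem_meetingRatios (hK : K.Nonempty) : 1 ∈ meetingRatios x K := by
  obtain ⟨y, hy⟩ := hK
  exact ⟨right_mem_Icc.2 zero_le_one, y, hy, by simpa using hy⟩

theorem pos_of_mem_meetingRatios (hx : x ∉ K) {r : ℝ} (hr : r ∈ meetingRatios x K) : 0 < r := by
  obtain ⟨⟨hr0, -⟩, y, -, hry⟩ := hr
  refine hr0.lt_of_ne' ?_
  rintro rfl
  exact hx (by simpa using hry)

theorem collinear_homothety (x y : E) (r : ℝ) : Collinear ℝ {x, homothety x r y, y} := by
  rw [insert_comm, homothety_eq_lineMap]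
  exact collinear_insert_of_mem_affineSpan_pair (lineMap_mem_affineSpan_pair r x y)

variable [TopologicalSpace E]

theorem mem_toExposed_of_homothety_mem {f : StrongDual ℝ E} {a r : ℝ} {y : E} (hr : 0 < r)
    (hy : y ∈ K) (hry : homothety x r y ∈ K) (hle : ∀ z ∈ K, f z ≤ a)
    (hge : ∀ z ∈ K, a ≤ f (homothety x r z)) :
    homothety x r y ∈ f.toExposed K ∧ y ∈ (-f).toExposed K := by
  have hmin : ∀ z ∈ K, f y ≤ f z := fun z hz => by
    have hscaled : f (homothety x r y) ≤ f (homothety x r z) := (hle _ hry).trans (hge z hz)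
    simpa only [homothety_apply, vsub_eq_sub, vadd_eq_add, map_add, map_smul, map_sub, smul_eq_mul,
      add_le_add_iff_right, mul_le_mul_iff_right₀ hr, sub_le_sub_iff_right] using hscaled
  exact ⟨⟨hry, fun z hz => (hle z hz).trans (hge y hy)⟩, hy, fun z hz => neg_le_neg (hmin z hz)⟩

variable [IsTopologicalAddGroup E] [ContinuousSMul ℝ E]

theorem isCompact_meetingRatios [T2Space E] (hK : IsCompact K) :
    IsCompact (meetingRatios x K) := by
  have hcont : Continuous fun p : ℝ × E => homothety x p.1 p.2 := by
    simp only [homothety_apply, vsub_eq_sub, vadd_eq_add]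
    fun_prop
  have himage : meetingRatios x K =
      Prod.fst '' (Icc 0 1 ×ˢ K ∩ (fun p : ℝ × E => homothety x p.1 p.2) ⁻¹' K) := by
    ext r
    simp [meetingRatios, and_assoc]
  rw [himage]
  exact ((isCompact_Icc.prod hK).inter_right (hK.isClosed.preimage hcont)).image continuous_fst

theorem disjoint_interior_homothety_image (hx : x ∉ K) {r : ℝ}
    (hr : IsLeast (meetingRatios x K) r) : Disjoint (interior K) (homothety x r '' K) := by
  have hr0 : 0 < r := pos_of_mem_meetingRatios hx hr.1
  rw [disjoint_right]
  rintro _ ⟨y, hy, rfl⟩ hint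
  have hnear : ∀ᶠ δ in 𝓝[<] (1 : ℝ), homothety x δ (homothety x r y) ∈ K :=
    (eventually_homothety_mem_of_mem_interior ℝ x hint).filter_mono nhdsWithin_le_nhds
  obtain ⟨δ, hδK, hδ0, hδ1⟩ := (hnear.and (Ioo_mem_nhdsLT zero_lt_one)).exists
  rw [← homothety_mul_apply] at hδK
  have hlt : δ * r < r := mul_lt_of_lt_one_left hr0 hδ1
  exact hlt.not_ge (hr.2 ⟨⟨by positivity, hlt.le.trans hr.1.1.2⟩, y, hy, hδK⟩)

theorem disjoint_toExposed_neg_toExposed {f : StrongDual ℝ E} (hf : f ≠ 0)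
    (hint : (interior K).Nonempty) : Disjoint (f.toExposed K) ((-f).toExposed K) := by
  rw [disjoint_left]
  rintro p ⟨-, hmax⟩ ⟨-, hmin⟩
  have hconst : f '' interior K ⊆ {f p} := by
    rintro _ ⟨y, hy, rfl⟩
    exact (hmax y (interior_subset hy)).antisymm (neg_le_neg_iff.1 (hmin y (interior_subset hy)))
  have hopen : IsOpen (f '' interior K) := f.isOpenMap_of_ne_zero hf _ isOpen_interior
  rw [(hint.image f).subset_singleton_iff.1 hconst] at hopen
  exact not_isOpen_singleton (f p) hopen

theorem exists_line_through_disjoint_faces_general [T2Space E] (hconv : Convex ℝ K)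
    (hcomp : IsCompact K) (hint : (interior K).Nonempty) (hx : x ∉ K) :
    ∃ F G : Set E, IsExposed ℝ K F ∧ IsExposed ℝ K G ∧ F ∩ G = ∅ ∧
      ∃ u ∈ F, ∃ v ∈ G, Collinear ℝ {x, u, v} := by
  have hne : K.Nonempty := hint.mono interior_subset
  obtain ⟨r, hr⟩ := (isCompact_meetingRatios hcomp).exists_isLeast ⟨1, one_mem_meetingRatios hne⟩
  obtain ⟨f, a, hf, hle, hge⟩ := geometric_hahn_banach_of_nonempty_interior hconv
    (hconv.affine_image (homothety x r)) (disjoint_interior_homothety_image hx hr) hint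
    (hne.image _)
  obtain ⟨v, hvK, huK⟩ := hr.1.2
  obtain ⟨hu, hv⟩ := mem_toExposed_of_homothety_mem (pos_of_mem_meetingRatios hx hr.1) hvK huK hle
    fun z hz => hge _ (mem_image_of_mem _ hz)
  exact ⟨f.toExposed K, (-f).toExposed K, ContinuousLinearMap.toExposed.isExposed,
    ContinuousLinearMap.toExposed.isExposed, (disjoint_toExposed_neg_toExposed hf hint).inter_eq,
    _, hu, v, hv, collinear_homothety x v r⟩

/-- generalized Radon, after Bajmóczy–Bárány; Lemma
`lem:radon`, existence part. Let `𝒫 ⊂ ℝ^d` be a full-dimensional polytope,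
`d ≥ 3`, and let `x` be a point in the exterior of `𝒫`.  Then there are two
disjoint (exposed) faces `F` and `G` of `𝒫` and a line through `x` meeting
both, i.e. points `u ∈ F`, `v ∈ G` collinear with `x`. -/
theorem exists_line_through_disjoint_faces
    (d : ℕ) (hd : 3 ≤ d) (s : Finset (EuclideanSpace ℝ (Fin d)))
    (P : Set (EuclideanSpace ℝ (Fin d)))
    (hP : P = convexHull ℝ (s : Set (EuclideanSpace ℝ (Fin d))))
    (hdim : affineSpan ℝ P = ⊤)
    (x : EuclideanSpace ℝ (Fin d)) (hx : x ∉ P) :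
    ∃ F G : Set (EuclideanSpace ℝ (Fin d)),
      IsExposed ℝ P F ∧ IsExposed ℝ P G ∧ F ∩ G = ∅ ∧
      ∃ u ∈ F, ∃ v ∈ G, Collinear ℝ {x, u, v} := by
  have hconv : Convex ℝ P := hP ▸ convex_convexHull ℝ _
  exact exists_line_through_disjoint_faces_general hconv
    (hP ▸ s.finite_toSet.isCompact_convexHull ℝ)
    (hconv.interior_nonempty_iff_affineSpan_eq_top.2 hdim) hx

end BoydMaxwell
end
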